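/- For every n ≥ 2, the Černý automaton C_n is synchronizing and the length of its shortest reset word is exactly (n−1)²: the word (b a^{n−1})^{n−2} b of length (n−1)² is a reset word, and no word over {a, b} of length strictly less than (n−1)² is a reset word for C_n. -/

import Mathlib

/-- The two-letter alphabet of the Černý automaton. -/
inductive Letter
  | a
  | b
deriving DecidableEq

/-- The action of a letter of the Černý automaton `C_n` on the state set `ZMod n`:
`a` sends `i` to `i + 1 (mod n)`, and `b` sends `n - 1` to `0` and fixes every other state. -/
def step (n : ℕ) : Letter → ZMod n → ZMod n
  | Letter.a, p => p + 1
  | Letter.b, p => if p = -1 then 0 else p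

/-- The map `δ_w` induced by a word `w`, applying letters left to right. -/
def run (n : ℕ) : List Letter → ZMod n → ZMod n
  | [], p => p
  | x :: w, p => run n w (step n x p)

/-- The word `(b a^{n-1})^{n-2} b`: `n - 2` repetitions of the block consisting of one
`b` followed by `n - 1` copies of `a`, followed by one final `b`. -/
def cernyWord (n : ℕ) : List Letter :=
  (List.replicate (n - 2) (Letter.b :: List.replicate (n - 1) Letter.a)).flatten ++ [Letter.b]

/-!
Lower bound: put `A = w.count a` and let `e p` be the number of occurrences of `b` that are read in
state `-1` when `w` is run from `p`. The run ends in `p + A + e p`, so if `w` resets to `c`, then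
`e p ≡ c - A - p` takes every value modulo `n`; in particular `e p ≥ n - 1` for some `p`. Walking
around the cycle, each such `b` completes a turn, so `n * e p ≤ p + A + e p`, where
`p ≤ n - 1` and `A + e p ≤ |w|`. Hence `(n - 1) * n ≤ (n - 1) + |w|`.

Upper bound: in the coordinate `p + 1 ∈ {0, …, n - 1}` the block `b a^{n-1}` is the truncated
predecessor, and so is the final `b` when its result is read in the coordinate `p`.
-/

/-- A word is a reset word for `C_n` if it maps all states to a single one. -/
def IsResetWord (n : ℕ) (w : List Letter) : Prop :=
  ∃ c : ZMod n, ∀ p : ZMod n, run n w p = c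

theorem run_append (n : ℕ) (u v : List Letter) (p : ZMod n) :
    run n (u ++ v) p = run n v (run n u p) := by
  induction u generalizing p with
  | nil => rfl
  | cons x _ ih => exact ih (step n x p)

theorem run_flatten_replicate (n k : ℕ) (u : List Letter) (p : ZMod n) :
    run n (List.replicate k u).flatten p = (run n u)^[k] p := by
  induction k generalizing p with
  | zero => rfl
  | succ k ih =>
    rw [List.replicate_succ, List.flatten_cons, run_append, ih, Function.iterate_succ_apply]

theorem run_replicate_a (n k : ℕ) (p : ZMod n) :
    run n (List.replicate k Letter.a) p = p + k := by
  induction k generalizing p with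
  | zero => simp [run]
  | succ k ih =>
    simp only [List.replicate_succ, run, step, ih]
    push_cast
    ring

/-- The block `b a^{n-1}` repeated in the word `(b a^{n-1})^{n-2} b`. -/
def cernyBlock (n : ℕ) : List Letter :=
  Letter.b :: List.replicate (n - 1) Letter.a

theorem val_neg_one_add_one (n : ℕ) [NeZero n] : (-1 : ZMod n).val + 1 = n := by
  obtain ⟨m, rfl⟩ := Nat.exists_eq_add_one_of_ne_zero (NeZero.ne n)
  rw [ZMod.val_neg_one]

theorem val_add_one_of_ne_neg_one {n : ℕ} [NeZero n] {p : ZMod n} (hp : p ≠ -1) :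
    (p + 1).val = p.val + 1 := by
  have hval : p.val ≠ (-1 : ZMod n).val := (ZMod.val_injective n).ne hp
  have hlt : p.val + 1 < n := by grind [val_neg_one_add_one n, ZMod.val_lt p]
  rw [← ZMod.val_natCast_of_lt hlt, Nat.cast_add_one, ZMod.natCast_zmod_val]

section UpperBound

variable {n : ℕ} [NeZero n]

theorem val_step_b (p : ZMod n) : (step n Letter.b p).val = (p + 1).val.pred := by
  by_cases hp : p = -1
  · simp [step, hp]
  · simp [step, hp, val_add_one_of_ne_neg_one hp]

theorem run_cernyBlock (p : ZMod n) : run n (cernyBlock n) p = step n Letter.b p - 1 := by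
  simp only [cernyBlock, run, run_replicate_a, Nat.cast_pred (NeZero.pos n), ZMod.natCast_self]
  ring

theorem semiconj_run_cernyBlock :
    Function.Semiconj (fun p : ZMod n ↦ (p + 1).val) (run n (cernyBlock n)) Nat.pred := by
  intro p
  simp only [run_cernyBlock, sub_add_cancel, val_step_b]

theorem run_cernyWord (p : ZMod n) : run n (cernyWord n) p = 0 := by
  have hblocks : ((run n (cernyBlock n))^[n - 2] p + 1).val = (p + 1).val - (n - 2) :=
    (semiconj_run_cernyBlock.iterate_right (n - 2) p).trans (Nat.pred_iterate _ _)
  have hlt : (p + 1).val < n := ZMod.val_lt _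
  rw [← ZMod.val_eq_zero]
  calc
    (run n (cernyWord n) p).val
      = (step n Letter.b ((run n (cernyBlock n))^[n - 2] p)).val := by
        rw [← run_flatten_replicate, cernyWord, run_append]
        rfl
    _ = ((p + 1).val - (n - 2)).pred := by rw [val_step_b, hblocks]
    _ = 0 := by rw [Nat.pred_eq_sub_one]; lia

end UpperBound

theorem length_cernyWord {n : ℕ} (hn : 2 ≤ n) : (cernyWord n).length = (n - 1) ^ 2 := by
  obtain ⟨m, rfl⟩ := Nat.exists_eq_add_of_le' hn
  simp only [cernyWord, List.length_append, List.length_flatten, List.map_replicate,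
    List.sum_replicate, List.length_cons, List.length_replicate, List.length_nil, smul_eq_mul,
    Nat.add_sub_cancel, Nat.add_one_sub_one]
  ring

/-- The number of occurrences of `b` in the word that are read in state `-1`, the only state moved
by `b` (for `n ≠ 1`), when the word is run from a given state. -/
def effectiveCount (n : ℕ) : List Letter → ZMod n → ℕ
  | [], _ => 0
  | Letter.a :: w, p => effectiveCount n w (step n Letter.a p)
  | Letter.b :: w, p => effectiveCount n w (step n Letter.b p) + if p = -1 then 1 else 0

theorem count_a_add_effectiveCount_le_length (n : ℕ) (w : List Letter) (p : ZMod n) :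
    w.count Letter.a + effectiveCount n w p ≤ w.length := by
  induction w generalizing p with
  | nil => rfl
  | cons x w ih => cases x <;> grind [effectiveCount]

theorem run_eq_add_effectiveCount (n : ℕ) (w : List Letter) (p : ZMod n) :
    run n w p = p + w.count Letter.a + effectiveCount n w p := by
  induction w generalizing p with
  | nil => simp [run, effectiveCount]
  | cons x w ih =>
    cases x with
    | a =>
      simp only [run, ih, effectiveCount, step, List.count_cons_self]
      push_cast
      ring
    | b =>
      have hstep : step n Letter.b p = p + if p = -1 then 1 else 0 := by
        by_cases hp : p = -1 <;> simp [step, hp]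
      rw [run, ih, effectiveCount, hstep, List.count_cons_of_ne (by decide)]
      push_cast
      ring

theorem mul_effectiveCount_le {n : ℕ} [NeZero n] (w : List Letter) (p : ZMod n) :
    n * effectiveCount n w p ≤ p.val + w.count Letter.a + effectiveCount n w p := by
  induction w generalizing p with
  | nil => simp [effectiveCount]
  | cons x w ih =>
    cases x with
    | a =>
      have hval : (p + 1).val ≤ p.val + 1 := by
        grw [ZMod.val_add_le, ZMod.val_one_eq_one_mod, Nat.mod_le]
      simp only [effectiveCount, step, List.count_cons_self]
      linarith [ih (p + 1)]
    | b =>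
      rw [List.count_cons_of_ne (by decide)]
      rcases eq_or_ne p (-1) with rfl | hp
      · have hval : (-1 : ZMod n).val + 1 = n := val_neg_one_add_one n
        have hzero := ih 0
        rw [ZMod.val_zero] at hzero
        simp only [effectiveCount, step, if_true]
        linarith
      · simpa only [effectiveCount, step, if_neg hp, add_zero] using ih p

theorem IsResetWord.effectiveCount_surjective {n : ℕ} {w : List Letter} (hw : IsResetWord n w) :
    Function.Surjective fun p : ZMod n ↦ (effectiveCount n w p : ZMod n) := by
  obtain ⟨c, hc⟩ := hw
  intro r
  refine ⟨c - w.count Letter.a - r, ?_⟩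
  have hrun := run_eq_add_effectiveCount n w (c - w.count Letter.a - r)
  rw [hc] at hrun
  linear_combination -hrun

theorem IsResetWord.sq_le_length {n : ℕ} [NeZero n] {w : List Letter} (hw : IsResetWord n w) :
    (n - 1) ^ 2 ≤ w.length := by
  obtain ⟨p, hp : (effectiveCount n w p : ZMod n) = -1⟩ := hw.effectiveCount_surjective (-1)
  have hdvd : n ∣ effectiveCount n w p + 1 := by
    rw [← ZMod.natCast_eq_zero_iff, Nat.cast_add_one, hp, neg_add_cancel]
  have hcount : n ≤ effectiveCount n w p + 1 := Nat.le_of_dvd (Nat.succ_pos _) hdvd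
  have hval : p.val < n := ZMod.val_lt p
  have hlength := count_a_add_effectiveCount_le_length n w p
  have hturns : n * (n - 1) ≤ (n - 1) + w.length := calc
    n * (n - 1) ≤ n * effectiveCount n w p := by gcongr; lia
    _ ≤ p.val + w.count Letter.a + effectiveCount n w p := mul_effectiveCount_le w p
    _ ≤ (n - 1) + w.length := by lia
  obtain ⟨m, rfl⟩ := Nat.exists_eq_add_one_of_ne_zero (NeZero.ne n)
  rw [Nat.add_sub_cancel] at hturns ⊢
  linarith

/-- For every `n ≥ 2`, the Černý automaton `C_n` is synchronizing and its shortest reset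
word has length exactly `(n - 1)²`: the word `(b a^{n-1})^{n-2} b` of length `(n - 1)²`
is a reset word, and no word of length strictly less than `(n - 1)²` is a reset word. -/
theorem cerny_reset_threshold (n : ℕ) (hn : 2 ≤ n) :
    (∃ c : ZMod n, ∀ p : ZMod n, run n (cernyWord n) p = c) ∧
    (cernyWord n).length = (n - 1) ^ 2 ∧
    (∀ w : List Letter, w.length < (n - 1) ^ 2 →
      ¬ ∃ c : ZMod n, ∀ p : ZMod n, run n w p = c) := by
  have : NeZero n := ⟨by lia⟩
  exact ⟨⟨0, run_cernyWord⟩, length_cernyWord hn, fun w hlt hw ↦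
    hlt.not_ge (IsResetWord.sq_le_length hw)⟩
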